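/- arXiv:1312.3889 — 3 statements merged into one kernel-verified Lean document; each statement's English description precedes it below -/
import Mathlib

section
/- Let K be a finite field of characteristic p and let d be an integer with gcd(d, |K| − 1) = 1 that is nondegenerate over K. Then there exist a, b ∈ K^× such that W_{K,d}(a) is a positive real number and W_{K,d}(b) is a negative real number. -/
open scoped BigOperators Classical

/-- The canonical additive character of a finite field `K` of characteristic `p`:
`ψ_K(x) = exp(2πi · Tr_{K/F_p}(x) / p)`, where `Tr_{K/F_p}` is the absolute trace. -/
noncomputable def canonicalAddChar (p : ℕ) [Fact p.Prime] (K : Type) [Field K] [Fintype K]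
    [Algebra (ZMod p) K] (x : K) : ℂ :=
  Complex.exp (2 * Real.pi * Complex.I * ((Algebra.trace (ZMod p) K x).val : ℂ) / (p : ℂ))

/-- The Weil sum `W_{K,d}(a) = ∑_{x ∈ K} ψ_K(x^d + a·x)`. -/
noncomputable def weilSum (p : ℕ) [Fact p.Prime] (K : Type) [Field K] [Fintype K]
    [Algebra (ZMod p) K] (d : ℤ) (a : K) : ℂ :=
  ∑ x : K, canonicalAddChar p K (x ^ d + a * x)

/-- The value set `{W_{K,d}(a) : a ∈ K^×}` of the Weil sum. -/
noncomputable def weilValues (p : ℕ) [Fact p.Prime] (K : Type) [Field K] [Fintype K]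
    [Algebra (ZMod p) K] (d : ℤ) : Set ℂ :=
  {w : ℂ | ∃ a : K, a ≠ 0 ∧ weilSum p K d a = w}

/-- `d` is degenerate over a finite field of order `q` and characteristic `p` if
`d ≡ p^j (mod q − 1)` for some nonnegative integer `j`. -/
def IsDegenerate (p : ℕ) (q : ℕ) (d : ℤ) : Prop :=
  ∃ j : ℕ, d ≡ (p : ℤ) ^ j [ZMOD (q : ℤ) - 1]

/-! The sums `W(a)` are the Fourier coefficients of `x ↦ ψ(x ^ d)`. They are real since `x ↦ x ^ d`
is odd, and `W(0) = 0` since `x ↦ x ^ d` permutes `K`. Fourier inversion at `0` gives `∑ W(a) = q`,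
so some `W(a)` is positive, and Parseval gives `∑ W(a)² = q²`. If no `W(a)` were negative, then
`∑ W(a) (q - W(a)) = 0` would have nonnegative terms, so `W(a) = q` for some `a ≠ 0`: every
`Tr(x ^ d + a x)` would vanish. Multiplying this trace by `x⁻¹` and summing over `x ≠ 0` isolates
the coefficient of `x` in `∑ i, (x ^ d + a x) ^ p ^ i` modulo `x ^ (q - 1) - 1`; it is `a` when `d`
is nondegenerate, a contradiction. -/

theorem exists_eq_sum_of_sum_sq_eq_sq_sum {ι α : Type*} [Fintype ι] [Nonempty ι] [CommRing α]
    [LinearOrder α] [IsStrictOrderedRing α] {f : ι → α}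
    (hf : ∀ i, 0 ≤ f i) (h : ∑ i, f i ^ 2 = (∑ i, f i) ^ 2) : ∃ i, f i = ∑ j, f j := by
  by_contra! hne
  have hlt (i) : f i < ∑ j, f j :=
    (Finset.single_le_sum (fun j _ => hf j) (Finset.mem_univ i)).lt_of_ne (hne i)
  have hsum : ∑ i, f i * (∑ j, f j - f i) = 0 := by
    simp only [mul_sub, Finset.sum_sub_distrib, ← Finset.sum_mul, ← sq, h, sub_self]
  rw [Fintype.sum_eq_zero_iff_of_nonneg fun i => mul_nonneg (hf i) (sub_pos.2 (hlt i)).le] at hsum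
  have hzero (i) : f i = 0 :=
    (mul_eq_zero.1 (congrFun hsum i)).resolve_right (sub_pos.2 (hlt i)).ne'
  obtain ⟨i⟩ := ‹Nonempty ι›
  exact hne i (by simp [hzero])

theorem eq_one_of_sum_eq_card {𝕜 ι : Type*} [RCLike 𝕜] [Fintype ι] {z : ι → 𝕜}
    (hz : ∀ i, ‖z i‖ ≤ 1) (h : ∑ i, z i = Fintype.card ι) (i : ι) : z i = 1 := by
  have hre (j) : RCLike.re (z j) ≤ 1 := (RCLike.re_le_norm _).trans (hz j)
  have hsum : ∑ j, (1 - RCLike.re (z j)) = 0 := by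
    rw [Finset.sum_sub_distrib, ← map_sum, h]
    simp
  rw [Fintype.sum_eq_zero_iff_of_nonneg fun j => sub_nonneg.2 (hre j)] at hsum
  have hone : RCLike.re (z i) = 1 := (sub_eq_zero.1 (congrFun hsum i)).symm
  have hnorm : ‖z i‖ = 1 := le_antisymm (hz i) (hone ▸ RCLike.re_le_norm (z i))
  simpa [hnorm] using RCLike.norm_le_re_iff_eq_norm.1 (hnorm.trans hone.symm).le

theorem modEq_pow_sub_of_mul_pow_modEq_one {Q d : ℤ} {n i : ℕ} (hi : i ≤ n)
    (h : d * Q ^ i ≡ 1 [ZMOD Q ^ n - 1]) : d ≡ Q ^ (n - i) [ZMOD Q ^ n - 1] :=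
  have hpow : Q ^ n ≡ 1 [ZMOD Q ^ n - 1] := Int.modEq_iff_dvd.2 ⟨-1, by ring⟩
  calc
    d = d * 1 := (mul_one d).symm
    _ ≡ d * Q ^ n [ZMOD Q ^ n - 1] := (hpow.mul_left d).symm
    _ = d * Q ^ i * Q ^ (n - i) := by rw [mul_assoc, pow_mul_pow_sub Q hi]
    _ ≡ 1 * Q ^ (n - i) [ZMOD Q ^ n - 1] := h.mul_right _
    _ = Q ^ (n - i) := one_mul _

theorem eq_zero_of_pow_modEq_one_of_lt {Q : ℤ} (hQ : 1 < Q) {n i : ℕ} (hi : i < n)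
    (h : Q ^ i ≡ 1 [ZMOD Q ^ n - 1]) : i = 0 := by
  by_contra hi0
  have hpos : 0 < Q ^ i - 1 := sub_pos.2 (one_lt_pow₀ hQ hi0)
  have hle : Q ^ n - 1 ≤ Q ^ i - 1 := Int.le_of_dvd hpos h.symm.dvd
  have hlt : Q ^ i < Q ^ n := pow_lt_pow_right₀ hQ hi
  omega

section Power

variable {K : Type*} [Field K]

theorem odd_zpow_of_injective {d : ℤ} (h : Function.Injective fun x : K => x ^ d) :
    Function.Odd fun x : K => x ^ d := by
  intro x
  rcases Int.even_or_odd d with hd | hd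
  · have hneg (y : K) : -y = y := h (hd.neg_zpow y)
    simp only [hneg]
  · exact hd.neg_zpow x

variable [Fintype K]

theorem zpow_eq_zpow_of_modEq {x : K} (hx : x ≠ 0) {m n : ℤ}
    (h : m ≡ n [ZMOD (Fintype.card K : ℤ) - 1]) : x ^ m = x ^ n := by
  lift x to Kˣ using hx.isUnit
  have hcard : ((Fintype.card Kˣ : ℕ) : ℤ) = (Fintype.card K : ℤ) - 1 := by
    rw [Fintype.card_units, Nat.cast_pred Fintype.card_pos]
  have horder : (orderOf x : ℤ) ∣ (Fintype.card K : ℤ) - 1 :=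
    hcard ▸ Int.natCast_dvd_natCast.2 orderOf_dvd_card
  exact_mod_cast zpow_eq_zpow_iff_modEq.2 (h.of_dvd horder)

theorem zpow_injective_of_isCoprime {d : ℤ} (hd0 : d ≠ 0)
    (hd : IsCoprime d ((Fintype.card K : ℤ) - 1)) : Function.Injective fun x : K => x ^ d := by
  intro x y (hxy : x ^ d = y ^ d)
  obtain ⟨u, v, huv⟩ := hd
  have hinv : d * u ≡ 1 [ZMOD (Fintype.card K : ℤ) - 1] :=
    Int.modEq_iff_dvd.2 ⟨v, by linear_combination -huv⟩
  have hroot {z : K} (hz : z ≠ 0) : (z ^ d) ^ u = z := by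
    rw [← zpow_mul, zpow_eq_zpow_of_modEq hz hinv, zpow_one]
  have hzero : x = 0 ↔ y = 0 := by rw [← zpow_eq_zero_iff hd0, hxy, zpow_eq_zero_iff hd0]
  by_cases hx : x = 0
  · rw [hx, hzero.1 hx]
  · rw [← hroot hx, hxy, hroot (mt hzero.2 hx)]

theorem sum_units_zpow (n : ℤ) :
    ∑ u : Kˣ, (u : K) ^ n = if (Fintype.card K : ℤ) - 1 ∣ n then -1 else 0 := by
  have hq : (1 : ℤ) < Fintype.card K := mod_cast Fintype.one_lt_card (α := K)
  obtain ⟨m, hm⟩ := Int.eq_ofNat_of_zero_le (Int.emod_nonneg n (sub_pos.2 hq).ne')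
  have hnm : n ≡ m [ZMOD (Fintype.card K : ℤ) - 1] := hm ▸ (Int.mod_modEq n _).symm
  have hdvd : Fintype.card K - 1 ∣ m ↔ (Fintype.card K : ℤ) - 1 ∣ n := by
    rw [hnm.dvd_iff, ← Int.natCast_dvd_natCast, Nat.cast_pred Fintype.card_pos]
  simp only [zpow_eq_zpow_of_modEq (Units.ne_zero _) hnm, zpow_natCast,
    FiniteField.sum_pow_units, hdvd]

end Power

section Trace

variable {F L : Type*} [Field F] [Field L] [Fintype L] [Algebra F L]

theorem natCast_card_eq_pow_finrank :
    (Fintype.card L : ℤ) = (Nat.card F : ℤ) ^ Module.finrank F L := by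
  rw [← Nat.card_eq_fintype_card, Module.natCard_eq_pow_finrank (K := F), Nat.cast_pow]

theorem sum_units_trace_mul_zpow_mul_inv (c : L) (n : ℤ) :
    ∑ u : Lˣ, algebraMap F L (Algebra.trace F L (c * (u : L) ^ n)) * (u : L)⁻¹ =
      -∑ i ∈ Finset.range (Module.finrank F L) with
        n * (Nat.card F : ℤ) ^ i ≡ 1 [ZMOD (Fintype.card L : ℤ) - 1],
        c ^ Nat.card F ^ i := by
  have hterm (u : Lˣ) (i : ℕ) : (c * (u : L) ^ n) ^ Nat.card F ^ i * (u : L)⁻¹ =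
      c ^ Nat.card F ^ i * (u : L) ^ (n * (Nat.card F : ℤ) ^ i - 1) := by
    rw [mul_pow, mul_assoc, zpow_sub_one₀ u.ne_zero, zpow_mul]
    norm_cast
  simp only [FiniteField.algebraMap_trace_eq_sum_pow, Finset.sum_mul, hterm]
  rw [Finset.sum_comm, Finset.sum_filter, ← Finset.sum_neg_distrib]
  refine Finset.sum_congr rfl fun i _ => ?_
  simp only [← Finset.mul_sum, sum_units_zpow, ← Int.modEq_iff_dvd, Int.modEq_comm (a := 1),
    mul_ite, mul_neg_one, mul_zero, neg_ite, neg_zero]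

theorem sum_units_trace_mul_mul_inv (c : L) :
    ∑ u : Lˣ, algebraMap F L (Algebra.trace F L (c * u)) * (u : L)⁻¹ = -c := by
  have hQ : (1 : ℤ) < Nat.card F := by
    have := Finite.of_injective _ (algebraMap F L).injective
    exact_mod_cast Finite.one_lt_card (α := F)
  have hindex : {i ∈ Finset.range (Module.finrank F L) |
      1 * (Nat.card F : ℤ) ^ i ≡ 1 [ZMOD (Fintype.card L : ℤ) - 1]} = {0} := by
    ext i
    rw [Finset.mem_filter, Finset.mem_range, Finset.mem_singleton, one_mul,
      natCast_card_eq_pow_finrank (F := F)]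
    refine ⟨fun ⟨hi, h⟩ => eq_zero_of_pow_modEq_one_of_lt hQ hi h, ?_⟩
    rintro rfl
    exact ⟨Module.finrank_pos, by rw [pow_zero]⟩
  have h := sum_units_trace_mul_zpow_mul_inv (F := F) c 1
  simpa only [hindex, zpow_one, Finset.sum_singleton, pow_zero, pow_one] using h

theorem exists_modEq_card_pow_of_trace_eq_zero {d : ℤ} {a : L} (ha : a ≠ 0)
    (h : ∀ u : Lˣ, Algebra.trace F L ((u : L) ^ d + a * u) = 0) :
    ∃ j : ℕ, d ≡ (Nat.card F : ℤ) ^ j [ZMOD (Fintype.card L : ℤ) - 1] := by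
  have hsum : ∑ u : Lˣ, algebraMap F L (Algebra.trace F L (1 * (u : L) ^ d)) * (u : L)⁻¹ = a := by
    rw [← sub_eq_zero, sub_eq_add_neg, ← sum_units_trace_mul_mul_inv (F := F) a,
      ← Finset.sum_add_distrib]
    simp [← add_mul, ← map_add, h]
  rw [sum_units_trace_mul_zpow_mul_inv] at hsum
  obtain ⟨i, hi, -⟩ := Finset.exists_ne_zero_of_sum_ne_zero (neg_ne_zero.1 (hsum.trans_ne ha))
  rw [Finset.mem_filter, Finset.mem_range, natCast_card_eq_pow_finrank (F := F)] at hi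
  rw [natCast_card_eq_pow_finrank (F := F)]
  exact ⟨_, modEq_pow_sub_of_mul_pow_modEq_one hi.1.le hi.2⟩

end Trace

theorem conj_sum_addChar_of_odd {𝕜 G H : Type*} [RCLike 𝕜] [AddCommGroup G] [Finite G] [AddGroup H]
    [Fintype H] (χ : AddChar G 𝕜) {f : H → G} (hf : f.Odd) :
    (starRingEnd 𝕜) (∑ x, χ (f x)) = ∑ x, χ (f x) := by
  rw [map_sum, ← Equiv.sum_comp (Equiv.neg H)]
  simp only [Equiv.neg_apply, hf _, AddChar.map_neg_eq_conj, RCLike.conj_conj]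

section Fourier

variable {R R' : Type*} [CommRing R] [Fintype R] [CommRing R'] [IsDomain R'] {ψ : AddChar R R'}

theorem sum_sum_mul_addChar (hψ : ψ.IsPrimitive) (f : R → R') :
    ∑ a, ∑ x, f x * ψ (a * x) = Fintype.card R * f 0 := by
  rw [Finset.sum_comm]
  simp only [← Finset.mul_sum, AddChar.sum_mulShift _ hψ]
  simp [mul_comm]

/-- Parseval's identity, with `g (-x)` in place of a complex conjugate. -/
theorem sum_mul_sum_mul_addChar (hψ : ψ.IsPrimitive) (f g : R → R') :
    ∑ a, (∑ x, f x * ψ (a * x)) * ∑ y, g y * ψ (a * y) =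
      Fintype.card R * ∑ x, f x * g (-x) := by
  have hprod (a) : (∑ x, f x * ψ (a * x)) * ∑ y, g y * ψ (a * y) =
      ∑ z, (∑ x, f x * g (z - x)) * ψ (a * z) := by
    simp only [Finset.sum_mul]
    rw [Finset.sum_comm]
    refine Finset.sum_congr rfl fun x _ => ?_
    rw [Finset.mul_sum, ← (Equiv.subRight x).sum_comp]
    refine Finset.sum_congr rfl fun z _ => ?_
    rw [Equiv.subRight_apply, mul_mul_mul_comm, ← AddChar.map_add_eq_mul, ← mul_add,
      add_sub_cancel]
  simp only [hprod, sum_sum_mul_addChar hψ, zero_sub]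

end Fourier

section CanonicalCharacter

/-- The canonical additive character `x ↦ exp(2πi · Tr(x) / p)` as a homomorphism, for which the
library's orthogonality relations are available; see `canonicalAddChar_eq_traceAddChar`. -/
noncomputable def traceAddChar (p : ℕ) [NeZero p] (R : Type*) [CommRing R] [Algebra (ZMod p) R] :
    AddChar R ℂ :=
  ZMod.stdAddChar.compAddMonoidHom (Algebra.trace (ZMod p) R).toAddMonoidHom

theorem traceAddChar_eq_one_iff {p : ℕ} [NeZero p] {R : Type*} [CommRing R] [Algebra (ZMod p) R]
    {x : R} : traceAddChar p R x = 1 ↔ Algebra.trace (ZMod p) R x = 0 := by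
  change ZMod.stdAddChar (N := p) (Algebra.trace (ZMod p) R x) = 1 ↔ _
  rw [← AddChar.map_zero_eq_one (ZMod.stdAddChar (N := p)), ZMod.injective_stdAddChar.eq_iff]

theorem isPrimitive_traceAddChar (p : ℕ) [Fact p.Prime] (K : Type*) [Field K] [Finite K]
    [Algebra (ZMod p) K] : (traceAddChar p K).IsPrimitive := by
  obtain ⟨x, hx⟩ := Algebra.trace_surjective (ZMod p) K 1
  refine AddChar.IsPrimitive.of_ne_one (AddChar.ne_one_iff.2 ⟨x, ?_⟩)
  simp [traceAddChar_eq_one_iff, hx]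

theorem canonicalAddChar_eq_traceAddChar (p : ℕ) [Fact p.Prime] (K : Type) [Field K] [Fintype K]
    [Algebra (ZMod p) K] (x : K) : canonicalAddChar p K x = traceAddChar p K x :=
  (ZMod.toCircle_apply _).symm

end CanonicalCharacter

theorem ne_zero_of_not_isDegenerate {p q : ℕ} {d : ℤ} (hd : IsCoprime d ((q : ℤ) - 1))
    (hnd : ¬ IsDegenerate p q d) : d ≠ 0 := by
  rintro rfl
  exact hnd ⟨0, Int.modEq_iff_dvd.2 (isCoprime_zero_left.1 hd).dvd⟩

section WeilSum

variable {p : ℕ} [Fact p.Prime] {K : Type} [Field K] [Fintype K] [Algebra (ZMod p) K] {d : ℤ}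

theorem weilSum_eq_sum_traceAddChar (a : K) :
    weilSum p K d a = ∑ x, traceAddChar p K (x ^ d + a * x) :=
  Finset.sum_congr rfl fun _ _ => canonicalAddChar_eq_traceAddChar p K _

theorem weilSum_eq_sum_mul (a : K) :
    weilSum p K d a = ∑ x, traceAddChar p K (x ^ d) * traceAddChar p K (a * x) := by
  simp only [weilSum_eq_sum_traceAddChar, AddChar.map_add_eq_mul]

theorem weilSum_zero_of_injective (hinj : Function.Injective fun x : K => x ^ d) :
    weilSum p K d 0 = 0 := by
  have hbij : Function.Bijective fun x : K => x ^ d := Finite.injective_iff_bijective.1 hinj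
  simp only [weilSum_eq_sum_traceAddChar, zero_mul, add_zero]
  rw [hbij.sum_comp (traceAddChar p K)]
  simpa using AddChar.sum_mulShift (1 : K) (isPrimitive_traceAddChar p K)

theorem ofReal_re_weilSum (hodd : Function.Odd fun x : K => x ^ d) (a : K) :
    ((weilSum p K d a).re : ℂ) = weilSum p K d a := by
  have hodd' : Function.Odd fun x : K => x ^ d + a * x := fun x => by
    simp only [hodd x, mul_neg, neg_add]
  rw [← Complex.conj_eq_iff_re, weilSum_eq_sum_traceAddChar]
  exact conj_sum_addChar_of_odd (traceAddChar p K) hodd'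

theorem sum_weilSum (hd0 : d ≠ 0) : ∑ a, weilSum p K d a = Fintype.card K := by
  simp only [weilSum_eq_sum_mul]
  rw [sum_sum_mul_addChar (isPrimitive_traceAddChar p K) fun x => traceAddChar p K (x ^ d),
    zero_zpow d hd0, AddChar.map_zero_eq_one, mul_one]

theorem sum_weilSum_sq (hodd : Function.Odd fun x : K => x ^ d) :
    ∑ a, weilSum p K d a ^ 2 = (Fintype.card K : ℂ) ^ 2 := by
  simp only [weilSum_eq_sum_mul, sq]
  rw [sum_mul_sum_mul_addChar (isPrimitive_traceAddChar p K)]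
  simp [hodd _, ← AddChar.map_add_eq_mul]

theorem isDegenerate_of_weilSum_eq_card {a : K} (ha : a ≠ 0)
    (h : weilSum p K d a = Fintype.card K) : IsDegenerate p (Fintype.card K) d := by
  rw [weilSum_eq_sum_traceAddChar] at h
  have htrace (x : K) : Algebra.trace (ZMod p) K (x ^ d + a * x) = 0 :=
    traceAddChar_eq_one_iff.1 (eq_one_of_sum_eq_card (fun _ => (AddChar.norm_apply _ _).le) h x)
  simpa only [IsDegenerate, Nat.card_zmod] using
    exists_modEq_card_pow_of_trace_eq_zero ha fun u => htrace u

theorem sum_re_weilSum (hd0 : d ≠ 0) : ∑ a, (weilSum p K d a).re = Fintype.card K := by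
  rw [← Complex.re_sum, sum_weilSum hd0, Complex.natCast_re]

theorem exists_re_weilSum_pos (hd0 : d ≠ 0) : ∃ a, 0 < (weilSum p K d a).re := by
  have hsum : 0 < ∑ a, (weilSum p K d a).re := by
    rw [sum_re_weilSum hd0]
    exact_mod_cast Fintype.card_pos
  by_contra! hnonpos
  exact hsum.not_ge (Finset.sum_nonpos fun a _ => hnonpos a)

theorem exists_re_weilSum_neg (hinj : Function.Injective fun x : K => x ^ d)
    (hnd : ¬ IsDegenerate p (Fintype.card K) d) : ∃ a, (weilSum p K d a).re < 0 := by
  have hd0 : d ≠ 0 := by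
    rintro rfl
    exact zero_ne_one (hinj (by simp only [zpow_zero]))
  have hodd := odd_zpow_of_injective hinj
  by_contra! hnonneg
  have hsq : ∑ a, (weilSum p K d a).re ^ 2 = (∑ a, (weilSum p K d a).re) ^ 2 := by
    rw [sum_re_weilSum hd0, ← Complex.ofReal_inj]
    push_cast
    simpa only [ofReal_re_weilSum hodd] using sum_weilSum_sq hodd
  obtain ⟨a, ha⟩ := exists_eq_sum_of_sum_sq_eq_sq_sum hnonneg hsq
  rw [sum_re_weilSum hd0] at ha
  have hcard : weilSum p K d a = Fintype.card K := by
    rw [← ofReal_re_weilSum hodd a, ha, Complex.ofReal_natCast]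
  refine hnd (isDegenerate_of_weilSum_eq_card ?_ hcard)
  rintro rfl
  rw [weilSum_zero_of_injective hinj] at hcard
  exact Fintype.card_ne_zero (Nat.cast_eq_zero.1 hcard.symm)

end WeilSum

theorem stmt12 (p : ℕ) [Fact p.Prime] (K : Type) [Field K] [Fintype K] [CharP K p]
    [Algebra (ZMod p) K]
    (d : ℤ) (hd : Int.gcd d ((Fintype.card K : ℤ) - 1) = 1)
    (hnd : ¬ IsDegenerate p (Fintype.card K) d) :
    (∃ a : K, a ≠ 0 ∧ ∃ r : ℝ, 0 < r ∧ weilSum p K d a = (r : ℂ)) ∧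
    (∃ b : K, b ≠ 0 ∧ ∃ r : ℝ, r < 0 ∧ weilSum p K d b = (r : ℂ)) := by
  rw [← Int.isCoprime_iff_gcd_eq_one] at hd
  have hd0 : d ≠ 0 := ne_zero_of_not_isDegenerate hd hnd
  have hinj : Function.Injective fun x : K => x ^ d := zpow_injective_of_isCoprime hd0 hd
  have hodd : Function.Odd fun x : K => x ^ d := odd_zpow_of_injective hinj
  have hreal (a : K) : weilSum p K d a = (weilSum p K d a).re := (ofReal_re_weilSum hodd a).symm
  have hzero : (weilSum p K d 0).re = 0 := by rw [weilSum_zero_of_injective hinj, Complex.zero_re]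
  constructor
  · obtain ⟨a, ha⟩ := exists_re_weilSum_pos (p := p) (K := K) hd0
    exact ⟨a, fun h0 => ha.ne' (h0 ▸ hzero), _, ha, hreal a⟩
  · obtain ⟨b, hb⟩ := exists_re_weilSum_neg hinj hnd
    exact ⟨b, fun h0 => hb.ne (h0 ▸ hzero), _, hb, hreal b⟩
end

section
/- Let K be a finite field and let d be an integer with gcd(d, |K| − 1) = 1. Then for every b ∈ K with b ≠ 1, one has ∑_{a ∈ K^×} W_{K,d}(a) · W_{K,d}(b·a) = 0. -/
open scoped BigOperators Classical

/-!
Expanding the product and summing over all of `K` first, orthogonality of characters forces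
`x = -b * y` and leaves a multiple of `∑ y, ψ ((-b * y) ^ d + y ^ d)`. When `d ≠ 0`, the map
`x ↦ x ^ d` is an odd multiplicative bijection of `K`, so this is `∑ y, ψ ((1 - b ^ d) * y ^ d)`
with `b ^ d ≠ 1`, a sum of a nontrivial character over all of `K`. The term `a = 0` vanishes
because `W(0) = ∑ x, ψ (x ^ d)` is such a sum as well. When `d = 0`, already `W(a) = 0` for all
`a ≠ 0`.
-/

section Power

open Function

theorem zpow_left_bijective_of_coprime {G : Type*} [Group G] {d : ℤ}
    (hd : (Nat.card G).Coprime d.natAbs) : Bijective fun g : G ↦ g ^ d := by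
  obtain h | h := d.natAbs_eq <;> rw [h]
  · simpa only [zpow_natCast] using hd.pow_left_bijective
  · simpa only [zpow_neg, zpow_natCast, comp_def] using
      inv_involutive.bijective.comp hd.pow_left_bijective

theorem zpow_left_injective₀_of_coprime {G₀ : Type*} [GroupWithZero G₀] {d : ℤ} (hd₀ : d ≠ 0)
    (hd : (Nat.card G₀ˣ).Coprime d.natAbs) : Injective fun x : G₀ ↦ x ^ d := by
  intro x y (hxy : x ^ d = y ^ d)
  have eq_zero_iff : x = 0 ↔ y = 0 := by
    rw [← zpow_eq_zero_iff hd₀, hxy, zpow_eq_zero_iff hd₀]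
  by_cases hx : x = 0
  · rw [hx, eq_zero_iff.mp hx]
  · lift x to G₀ˣ using isUnit_iff_ne_zero.mpr hx
    lift y to G₀ˣ using isUnit_iff_ne_zero.mpr (mt eq_zero_iff.mpr hx)
    exact congrArg _ ((zpow_left_bijective_of_coprime hd).injective (Units.ext (mod_cast hxy)))

theorem exists_mulEquiv_eq_zpow {G₀ : Type*} [CommGroupWithZero G₀] [Finite G₀] {d : ℤ}
    (hd₀ : d ≠ 0) (hd : (Nat.card G₀ˣ).Coprime d.natAbs) :
    ∃ σ : G₀ ≃* G₀, ∀ x, σ x = x ^ d :=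
  ⟨.ofBijective (⟨fun x ↦ x ^ d, fun x y ↦ mul_zpow x y d⟩ : G₀ →ₙ* G₀)
    (Finite.injective_iff_bijective.mp (zpow_left_injective₀_of_coprime hd₀ hd)), fun _ ↦ rfl⟩

theorem natCard_units_coprime_natAbs {G₀ : Type*} [GroupWithZero G₀] [Fintype G₀] {d : ℤ}
    (hd : Int.gcd d ((Fintype.card G₀ : ℤ) - 1) = 1) : (Nat.card G₀ˣ).Coprime d.natAbs := by
  rw [Nat.card_units, Nat.card_eq_fintype_card, Nat.coprime_comm]
  rwa [← Nat.cast_pred Fintype.card_pos] at hd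

theorem map_neg_of_injective {R M : Type*} [Ring R] [NoZeroDivisors R] [FunLike M R R]
    [MonoidHomClass M R R] (σ : M) (hσ : Injective σ) (x : R) : σ (-x) = -σ x := by
  have map_neg_one : σ (-1) = -1 := by
    have sq_eq_one : σ (-1) * σ (-1) = 1 := by rw [← map_mul, neg_one_mul, neg_neg, map_one]
    obtain h | h := mul_self_eq_one_iff.mp sq_eq_one
    · have neg_one_eq_one : (-1 : R) = 1 := hσ (h.trans (map_one σ).symm)
      rw [h, neg_one_eq_one]
    · exact h
  rw [← neg_one_mul, map_mul, map_neg_one, neg_one_mul]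

end Power

theorem sum_units_eq_sum {G₀ A : Type*} [GroupWithZero G₀] [Fintype G₀] [Fintype G₀ˣ]
    [AddCommMonoid A] (g : G₀ → A) (hg : g 0 = 0) : ∑ u : G₀ˣ, g u = ∑ a, g a := by
  refine Fintype.sum_of_injective Units.val Units.val_injective _ _ (fun a ha ↦ ?_) fun _ ↦ rfl
  have a_eq_zero : a = 0 := by_contra fun h ↦ ha ⟨Units.mk0 a h, rfl⟩
  rw [a_eq_zero, hg]

section WalshTransform

variable {R R' : Type*} [CommRing R] [Fintype R] [CommRing R']

/-- The Walsh transform `a ↦ ∑ x, ψ (f x + a * x)` of a function `f : R → R` with respect to an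
additive character `ψ`. For a power function and the canonical character of a finite field it is
the Weil sum; some authors use `-a` in place of `a`. -/
def walshTransform (ψ : AddChar R R') (f : R → R) (a : R) : R' :=
  ∑ x, ψ (f x + a * x)

variable [IsDomain R'] {ψ : AddChar R R'}

theorem walshTransform_zero_of_bijective (hψ : ψ ≠ 1) {f : R → R} (hf : f.Bijective) :
    walshTransform ψ f 0 = 0 := by
  simp only [walshTransform, zero_mul, add_zero]
  rw [hf.sum_comp ψ, AddChar.sum_eq_zero_of_ne_one hψ]

theorem walshTransform_const_of_ne_zero (hψ : ψ.IsPrimitive) (c : R) {a : R} (ha : a ≠ 0) :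
    walshTransform ψ (fun _ ↦ c) a = 0 := by
  simp only [walshTransform, AddChar.map_add_eq_mul]
  rw [← Finset.mul_sum, show ∑ x, ψ (a * x) = 0 from AddChar.sum_eq_zero_of_ne_one (hψ ha),
    mul_zero]

theorem sum_walshTransform_mul_walshTransform (hψ : ψ.IsPrimitive) (f g : R → R) (b : R) :
    ∑ a, walshTransform ψ f a * walshTransform ψ g (b * a) =
      Fintype.card R * ∑ y, ψ (f (-b * y) + g y) := by
  classical
  have orthogonality (x y : R) :
      ∑ a, ψ (a * (x + b * y)) = if x = -b * y then (Fintype.card R : R') else 0 := by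
    rw [AddChar.sum_mulShift _ hψ, Nat.cast_ite, Nat.cast_zero]
    simp only [add_eq_zero_iff_eq_neg, neg_mul]
  calc ∑ a, walshTransform ψ f a * walshTransform ψ g (b * a)
      = ∑ a, ∑ x, ∑ y, ψ (f x + g y) * ψ (a * (x + b * y)) := by
        refine Finset.sum_congr rfl fun a _ ↦ ?_
        simp only [walshTransform, Finset.sum_mul_sum, ← AddChar.map_add_eq_mul]
        refine Finset.sum_congr rfl fun x _ ↦ Finset.sum_congr rfl fun y _ ↦ ?_
        ring_nf
    _ = ∑ y, ∑ x, ψ (f x + g y) * ∑ a, ψ (a * (x + b * y)) := by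
        simp only [Finset.mul_sum]
        rw [Finset.sum_comm_cycle]
        exact Finset.sum_congr rfl fun y _ ↦ Finset.sum_comm
    _ = Fintype.card R * ∑ y, ψ (f (-b * y) + g y) := by
        simp only [orthogonality, mul_ite, mul_zero, Finset.sum_ite_eq', Finset.mem_univ,
          if_true, ← Finset.sum_mul]
        rw [mul_comm]

end WalshTransform

section Field

variable {F R' : Type*} [Field F] [Fintype F] [CommRing R'] [IsDomain R'] {ψ : AddChar F R'}

theorem sum_walshTransform_mulEquiv_mul_walshTransform (hψ : ψ ≠ 1) (σ : F ≃* F) {b : F}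
    (hb : b ≠ 1) : ∑ a, walshTransform ψ σ a * walshTransform ψ σ (b * a) = 0 := by
  have one_sub_ne_zero : 1 - σ b ≠ 0 := sub_ne_zero.mpr fun h ↦ hb <|
    (map_eq_one_iff σ σ.injective).mp h.symm
  have combine (y : F) : σ (-b * y) + σ y = (1 - σ b) * σ y := by
    rw [map_mul, map_neg_of_injective σ σ.injective]
    ring
  have primitive := AddChar.IsPrimitive.of_ne_one hψ
  have sum_eq_zero : ∑ y, ψ ((1 - σ b) * σ y) = 0 := by
    rw [σ.bijective.sum_comp fun z ↦ ψ ((1 - σ b) * z)]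
    exact AddChar.sum_eq_zero_of_ne_one (primitive one_sub_ne_zero)
  simp only [sum_walshTransform_mul_walshTransform primitive, combine, sum_eq_zero, mul_zero]

theorem stmt14_general [Fintype Fˣ] (hψ : ψ ≠ 1) {d : ℤ}
    (hd : Int.gcd d ((Fintype.card F : ℤ) - 1) = 1) {b : F} (hb : b ≠ 1) :
    ∑ a : Fˣ, walshTransform ψ (· ^ d) (a : F) * walshTransform ψ (· ^ d) (b * (a : F)) = 0 := by
  obtain rfl | hd₀ := eq_or_ne d 0
  -- Only `F = 𝔽₂` occurs here. As `0 ^ 0 = 1`, the power map is constant, not bijective.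
  · simp only [zpow_zero, zero_mul, Finset.sum_const_zero, walshTransform_const_of_ne_zero
      (AddChar.IsPrimitive.of_ne_one hψ) 1 (Units.ne_zero _)]
  · obtain ⟨σ, hσ⟩ := exists_mulEquiv_eq_zpow hd₀ (natCard_units_coprime_natAbs hd)
    rw [← funext hσ, sum_units_eq_sum fun a ↦ walshTransform ψ σ a * walshTransform ψ σ (b * a)]
    · exact sum_walshTransform_mulEquiv_mul_walshTransform hψ σ hb
    · rw [walshTransform_zero_of_bijective hψ σ.bijective, zero_mul]

end Field

section Canonical

variable (p : ℕ) [Fact p.Prime] (K : Type) [Field K] [Algebra (ZMod p) K]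

/-- The canonical additive character `canonicalAddChar p K`, bundled as an `AddChar`. -/
noncomputable def canonicalAddCharHom : AddChar K ℂ :=
  ZMod.stdAddChar.compAddMonoidHom (Algebra.trace (ZMod p) K).toAddMonoidHom

theorem canonicalAddCharHom_apply [Fintype K] (x : K) :
    canonicalAddCharHom p K x = canonicalAddChar p K x := by
  simpa [canonicalAddChar, canonicalAddCharHom] using
    ZMod.stdAddChar_coe (N := p) (Algebra.trace (ZMod p) K x).val

theorem canonicalAddCharHom_ne_one [Finite K] : canonicalAddCharHom p K ≠ 1 := by
  have stdAddChar_ne_one : (ZMod.stdAddChar : AddChar (ZMod p) ℂ) ≠ 1 := fun h ↦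
    one_ne_zero <| ZMod.injective_stdAddChar (N := p) <| by rw [h]; rfl
  exact (AddChar.compAddMonoidHom_injective_left _ (Algebra.trace_surjective (ZMod p) K)).ne
    stdAddChar_ne_one

theorem walshTransform_canonicalAddCharHom [Fintype K] (d : ℤ) (a : K) :
    walshTransform (canonicalAddCharHom p K) (· ^ d) a = weilSum p K d a := by
  simp only [walshTransform, weilSum, canonicalAddCharHom_apply]

end Canonical

theorem stmt14 (p : ℕ) [Fact p.Prime] (K : Type) [Field K] [Fintype K] [DecidableEq K]
    [CharP K p] [Algebra (ZMod p) K]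
    (d : ℤ) (hd : Int.gcd d ((Fintype.card K : ℤ) - 1) = 1) :
    ∀ b : K, b ≠ 1 →
      ∑ a : Kˣ, weilSum p K d (a : K) * weilSum p K d (b * (a : K)) = 0 := by
  intro b hb
  simpa only [walshTransform_canonicalAddCharHom] using
    stmt14_general (canonicalAddCharHom_ne_one p K) hd hb
end

section
/- Let K be a finite field of characteristic p, let L be an extension of K such that [L : K] is a power of a prime ℓ with ℓ ≠ p, and let d be an integer with gcd(d, |L| − 1) = 1. Let e be the multiplicative inverse of d modulo p − 1, and let c = [L : K]^(1 − e), an element of the prime field F_p ⊆ K. Then for every a ∈ K, the complex number (W_{L,d}(a) − W_{K,d}(c·a)) / ℓ is an algebraic integer (i.e., is integral over ℤ). -/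
open scoped BigOperators Classical

/-!
The Galois group `G = Gal(L/K)` is an `ℓ`-group acting on `L`, and `x ↦ ψ_L(x ^ d + a * x)` is
constant on its orbits, because the absolute trace is Galois-invariant. Orbits of non-fixed points
have length divisible by `ℓ`, so modulo `ℓ` (in the ring of algebraic integers) the Weil sum over
`L` collapses to its part over the fixed field `K`. There `ψ_L = ψ_K(N · -)` with `N = [L : K]`,
and, as `N ^ (d * e) = N` by Fermat, substituting `x = N ^ (-e) * y` turns `N * (x ^ d + a * x)`
into `y ^ d + N ^ (1 - e) * a * y`.
-/

lemma sum_eq_sum_card_fiber_mul {X R : Type*} [Fintype X] [NonAssocSemiring R] (f : X → R)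
    {s : Finset R} (hf : ∀ x, f x ∈ s) :
    ∑ x, f x = ∑ t ∈ s, (Nat.card {x // f x = t} : R) * t := by
  rw [← Finset.sum_fiberwise_of_maps_to fun x _ => hf x]
  refine Finset.sum_congr rfl fun t _ => ?_
  rw [Finset.sum_eq_card_nsmul fun x hx => (Finset.mem_filter.1 hx).2, nsmul_eq_mul,
    Nat.card_eq_fintype_card, Fintype.card_subtype]

section PGroupAction

variable {G X : Type*} [Group G] [MulAction G X] {ℓ : ℕ} [Fact ℓ.Prime]

lemma card_fiber_modEq_card_fixedPoints_fiber [Finite X] (hG : IsPGroup ℓ G) {α : Type*}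
    (f : X → α) (hf : ∀ (g : G) x, f (g • x) = f x) (t : α) :
    Nat.card {x : X // f x = t} ≡ Nat.card {x : MulAction.fixedPoints G X // f x = t} [MOD ℓ] := by
  let fiber : SubMulAction G X :=
    { carrier := {x | f x = t}
      smul_mem' := fun g x hx => (hf g x).trans hx }
  let fixedEquiv : MulAction.fixedPoints G fiber ≃ {x : MulAction.fixedPoints G X // f x = t} :=
    { toFun := fun x => ⟨⟨x.1.1, fun g => congrArg Subtype.val (x.2 g)⟩, x.1.2⟩
      invFun := fun x => ⟨⟨x.1.1, x.2⟩, fun g => Subtype.ext (x.1.2 g)⟩ }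
  exact Nat.card_congr fixedEquiv ▸ hG.card_modEq_card_fixedPoints fiber

variable [Fintype X] [Fintype (MulAction.fixedPoints G X)]

theorem natCast_dvd_sum_sub_sum_fixedPoints (hG : IsPGroup ℓ G) {R : Type*} [Ring R]
    (f : X → R) (hf : ∀ (g : G) x, f (g • x) = f x) :
    (ℓ : R) ∣ ∑ x, f x - ∑ x : MulAction.fixedPoints G X, f x := by
  have f_mem (x : X) : f x ∈ Finset.univ.image f := Finset.mem_image_of_mem f (Finset.mem_univ x)
  rw [sum_eq_sum_card_fiber_mul f f_mem,
    sum_eq_sum_card_fiber_mul (fun x : MulAction.fixedPoints G X => f x) fun x => f_mem x,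
    ← Finset.sum_sub_distrib]
  refine Finset.dvd_sum fun t _ => ?_
  obtain ⟨m, hm⟩ := (card_fiber_modEq_card_fixedPoints_fiber hG f hf t).symm.dvd
  have hcast := congrArg (Int.cast : ℤ → R) hm
  push_cast at hcast
  rw [← sub_mul, hcast, mul_assoc]
  exact dvd_mul_right _ _

theorem isIntegral_sum_sub_sum_fixedPoints_div (hG : IsPGroup ℓ G) {A F : Type*} [CommRing A]
    [Field F] [Algebra A F] (f : X → F) (hf : ∀ (g : G) x, f (g • x) = f x)
    (hint : ∀ x, IsIntegral A (f x)) :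
    IsIntegral A ((∑ x, f x - ∑ x : MulAction.fixedPoints G X, f x) / (ℓ : F)) := by
  obtain ⟨z, hz⟩ := natCast_dvd_sum_sub_sum_fixedPoints hG
    (fun x => (⟨f x, hint x⟩ : integralClosure A F)) fun g x => Subtype.ext (hf g x)
  have hz' : ∑ x, f x - ∑ x : MulAction.fixedPoints G X, f x = ℓ * z := by
    simpa using congrArg Subtype.val hz
  rcases eq_or_ne (ℓ : F) 0 with hℓ | hℓ
  · simpa only [hℓ, div_zero] using isIntegral_zero
  · rw [hz', mul_div_cancel_left₀ _ hℓ]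
    exact z.2

end PGroupAction

lemma sum_fixedPoints_algEquiv {K L M : Type*} [Field K] [Field L] [Algebra K L] [IsGalois K L]
    [Fintype K] [Fintype (MulAction.fixedPoints (L ≃ₐ[K] L) L)] [AddCommMonoid M] (f : L → M) :
    ∑ x : MulAction.fixedPoints (L ≃ₐ[K] L) L, f x = ∑ y : K, f (algebraMap K L y) := by
  let incl (y : K) : MulAction.fixedPoints (L ≃ₐ[K] L) L :=
    ⟨algebraMap K L y, fun σ => σ.commutes y⟩
  have incl_bijective : Function.Bijective incl := by
    refine ⟨fun y z h => (algebraMap K L).injective (congrArg Subtype.val h), fun x => ?_⟩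
    obtain ⟨y, hy⟩ := (InfiniteGalois.mem_range_algebraMap_iff_fixed x.1).2 x.2
    exact ⟨y, Subtype.ext hy⟩
  exact (incl_bijective.sum_comp fun x => f x).symm

lemma natCast_zpow_eq_of_modEq {F : Type*} [DivisionRing F] {p : ℕ} [Fact p.Prime] [CharP F p]
    {N : ℕ} (hN : (N : F) ≠ 0) {i j : ℤ} (hij : i ≡ j [ZMOD (p : ℤ) - 1]) :
    (N : F) ^ i = (N : F) ^ j := by
  have fermat : (N : F) ^ p = N := by
    have h := congrArg (ZMod.castHom dvd_rfl F) (ZMod.pow_card (N : ZMod p))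
    rwa [map_pow, map_natCast] at h
  have pow_eq_one : (N : F) ^ ((p : ℤ) - 1) = 1 := by
    rw [zpow_sub_one₀ hN, zpow_natCast, fermat, mul_inv_cancel₀ hN]
  obtain ⟨k, hk⟩ := hij.dvd
  rw [eq_add_of_sub_eq' hk, zpow_add₀ hN, zpow_mul, pow_eq_one, one_zpow, mul_one]

lemma isIntegral_addChar_apply {A R : Type*} [AddGroup A] [Finite A] [Ring R] (ψ : AddChar A R)
    (x : A) : IsIntegral ℤ (ψ x) := by
  refine IsIntegral.of_pow (Nat.card_pos (α := A)) ?_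
  rw [← AddChar.map_nsmul_eq_pow, card_nsmul_eq_zero', AddChar.map_zero_eq_one]
  exact isIntegral_one

section CanonicalAddChar

variable (p : ℕ) [Fact p.Prime] {K L : Type} [Field K] [Fintype K] [Algebra (ZMod p) K]
  [Field L] [Fintype L] [Algebra (ZMod p) L]

lemma canonicalAddChar_eq_stdAddChar_trace (x : K) :
    canonicalAddChar p K x = ZMod.stdAddChar (Algebra.trace (ZMod p) K x) := by
  simpa [canonicalAddChar] using
    (ZMod.stdAddChar_coe (N := p) ((Algebra.trace (ZMod p) K x).val : ℤ)).symm

lemma isIntegral_canonicalAddChar (x : K) : IsIntegral ℤ (canonicalAddChar p K x) := by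
  rw [canonicalAddChar_eq_stdAddChar_trace]
  exact isIntegral_addChar_apply _ _

lemma canonicalAddChar_algEquiv (σ : K ≃ₐ[ZMod p] L) (x : K) :
    canonicalAddChar p L (σ x) = canonicalAddChar p K x := by
  rw [canonicalAddChar, Algebra.trace_eq_of_algEquiv, canonicalAddChar]

variable [Algebra K L]

lemma canonicalAddChar_algebraMap (x : K) :
    canonicalAddChar p L (algebraMap K L x) =
      canonicalAddChar p K ((Module.finrank K L : K) * x) := by
  have : IsScalarTower (ZMod p) K L := .of_algebraMap_eq' (RingHom.ext_zmod _ _)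
  rw [canonicalAddChar, ← Algebra.trace_trace (S := K), Algebra.trace_algebraMap, nsmul_eq_mul,
    canonicalAddChar]

theorem isIntegral_sum_canonicalAddChar_sub_div {ℓ : ℕ} [Fact ℓ.Prime]
    (hG : IsPGroup ℓ (L ≃ₐ[K] L)) (f : L → L) (hf : ∀ (σ : L ≃ₐ[K] L) x, f (σ x) = σ (f x))
    (g : K → K) (hfg : ∀ y, f (algebraMap K L y) = algebraMap K L (g y)) :
    IsIntegral ℤ ((∑ x, canonicalAddChar p L (f x) -
      ∑ y, canonicalAddChar p K ((Module.finrank K L : K) * g y)) / (ℓ : ℂ)) := by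
  have : IsScalarTower (ZMod p) K L := .of_algebraMap_eq' (RingHom.ext_zmod _ _)
  have invariant (σ : L ≃ₐ[K] L) (x : L) :
      canonicalAddChar p L (f (σ • x)) = canonicalAddChar p L (f x) := by
    rw [AlgEquiv.smul_def, hf]
    exact canonicalAddChar_algEquiv p (σ.restrictScalars (ZMod p)) (f x)
  have h := isIntegral_sum_sub_sum_fixedPoints_div hG (fun x => canonicalAddChar p L (f x))
    invariant fun x => isIntegral_canonicalAddChar p (f x)
  simpa only [sum_fixedPoints_algEquiv fun x => canonicalAddChar p L (f x), hfg,
    canonicalAddChar_algebraMap] using h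

lemma sum_canonicalAddChar_mul_eq_weilSum {N : K} (hN : N ≠ 0) {d e : ℤ} (hde : N ^ (d * e) = N)
    (a : K) :
    ∑ y, canonicalAddChar p K (N * (y ^ d + a * y)) = weilSum p K d (N ^ (1 - e) * a) := by
  have scale (y : K) :
      N * ((N ^ (-e) * y) ^ d + a * (N ^ (-e) * y)) = y ^ d + N ^ (1 - e) * a * y := by
    have hpow : N * (N ^ (-e) * y) ^ d = y ^ d := by
      rw [mul_zpow, ← zpow_mul, neg_mul, mul_comm e, zpow_neg, hde, mul_inv_cancel_left₀ hN]
    rw [mul_add, hpow, sub_eq_add_neg, zpow_add₀ hN, zpow_one]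
    ring
  rw [weilSum, ← (mulLeft_bijective₀ _ (zpow_ne_zero (-e) hN)).sum_comp]
  simp only [scale]

end CanonicalAddChar

theorem stmt15_general (p ℓ : ℕ) [Fact p.Prime] (hℓ : ℓ.Prime) (hℓp : ℓ ≠ p)
    (K L : Type) [Field K] [Fintype K] [Algebra (ZMod p) K]
    [Field L] [Fintype L] [Algebra (ZMod p) L] [Algebra K L]
    (n : ℕ) (hn : Module.finrank K L = ℓ ^ n)
    (d e : ℤ) (he : d * e ≡ 1 [ZMOD (p : ℤ) - 1])
    (c : K) (hc : c = ((Module.finrank K L : K)) ^ (1 - e)) (a : K) :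
    IsIntegral ℤ ((weilSum p L d (algebraMap K L a) - weilSum p K d (c * a)) / (ℓ : ℂ)) := by
  have : Fact ℓ.Prime := ⟨hℓ⟩
  have : CharP K p := charP_of_injective_algebraMap (algebraMap (ZMod p) K).injective p
  have hG : IsPGroup ℓ (L ≃ₐ[K] L) := .of_card (by rw [IsGalois.card_aut_eq_finrank, hn])
  have hN : (Module.finrank K L : K) ≠ 0 := by
    rw [hn, Nat.cast_pow]
    exact pow_ne_zero n (CharP.cast_ne_zero_of_ne_of_prime K hℓ hℓp.symm)
  have hde : (Module.finrank K L : K) ^ (d * e) = Module.finrank K L :=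
    (natCast_zpow_eq_of_modEq hN he).trans (zpow_one _)
  rw [hc, ← sum_canonicalAddChar_mul_eq_weilSum p hN hde]
  exact isIntegral_sum_canonicalAddChar_sub_div p hG (fun x => x ^ d + algebraMap K L a * x)
    (by simp) (fun y => y ^ d + a * y) (by simp)

theorem stmt15 (p ℓ : ℕ) [Fact p.Prime] (hℓ : ℓ.Prime) (hℓp : ℓ ≠ p)
    (K L : Type) [Field K] [Fintype K] [CharP K p] [Algebra (ZMod p) K]
    [Field L] [Fintype L] [CharP L p] [Algebra (ZMod p) L] [Algebra K L]
    (n : ℕ) (hn : Module.finrank K L = ℓ ^ n)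
    (d : ℤ) (hd : Int.gcd d ((Fintype.card L : ℤ) - 1) = 1)
    (e : ℤ) (he : d * e ≡ 1 [ZMOD (p : ℤ) - 1])
    (c : K) (hc : c = ((Module.finrank K L : K)) ^ (1 - e)) :
    ∀ a : K,
      IsIntegral ℤ ((weilSum p L d (algebraMap K L a) - weilSum p K d (c * a)) / (ℓ : ℂ)) :=
  stmt15_general p ℓ hℓ hℓp K L n hn d e he c hc
end
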